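/- Define Ω_{0,5}(X,Y)(f) = (X^(5)Y″ + X^(4)Y‴)f + 4X^(4)Y″f′ + 3X‴Y″f″ − (the same expression with X and Y exchanged). Then Ω_{0,5} = −[[C_{2,5}, C_{0,2}]] (with C_{2,5}(X)(f) = X‴f′ + X″f″ valued in D_{2,5} and C_{0,2}(X)(f) = X‴f + 2X″f′ valued in D_{0,2}); Ω_{0,5} is a 2-cocycle on Vect(1) with values in D_{0,5}; and there exist no α₀,…,α₆ ∈ ℝ such that Ω_{0,5} = ∂b, where b(X)(f) = Σ_{j=0}^{6} α_j X^(6−j) f^(j). -/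

import Mathlib

noncomputable section

/-- Polynomials over ℝ, identified with polynomial vector fields / densities on the line. -/
abbrev P : Type := Polynomial ℝ

/-- Derivative d/dx. -/
def D : P → P := fun f => Polynomial.derivative f

/-- Iterated derivative: `Dk k f = f^(k)`. -/
def Dk (k : ℕ) : P → P := D^[k]

/-- Lie bracket on Vect(1): [X,Y] = XY' - X'Y. -/
def br (X Y : P) : P := X * D Y - D X * Y

/-- Action of the vector field X on λ-densities: `L_X^λ f = X f' + λ X' f`. -/
def Lw (l : ℝ) (X f : P) : P := X * D f + Polynomial.C l * D X * f

/-- Action on operators from F_ν to F_μ: `L_X^{ν,μ}(A) = L_X^μ ∘ A - A ∘ L_X^ν`. -/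
def LD (nu mu : ℝ) (X : P) (A : P → P) (f : P) : P := Lw mu X (A f) - A (Lw nu X f)

/-- 1-cocycle condition with values in D_{ν,μ}. -/
def IsCocycle1 (nu mu : ℝ) (c : P → P → P) : Prop :=
  ∀ X Y f, c (br X Y) f = LD nu mu X (c Y) f - LD nu mu Y (c X) f

/-- 2-cocycle condition with values in D_{ν,μ}. -/
def IsCocycle2 (nu mu : ℝ) (o : P → P → P → P) : Prop :=
  ∀ X Y Z f,
    LD nu mu X (o Y Z) f - LD nu mu Y (o X Z) f + LD nu mu Z (o X Y) f
      - o (br X Y) Z f + o (br X Z) Y f - o (br Y Z) X f = 0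

/-- Cup product of 1-cochains: `[[C₁,C₂]](X,Y) = C₁(X)∘C₂(Y) - C₁(Y)∘C₂(X)`. -/
def cup (c₁ c₂ : P → P → P) (X Y f : P) : P := c₁ X (c₂ Y f) - c₁ Y (c₂ X f)

/-- Coboundary of a 1-cochain b with values in D_{ν,μ}. -/
def cob (nu mu : ℝ) (b : P → P → P) (X Y f : P) : P :=
  LD nu mu X (b Y) f - LD nu mu Y (b X) f - b (br X Y) f


/-- Half of the 2-cocycle `Ω_{0,5}`. -/
def term12 (X Y f : P) : P :=
  (Dk 5 X * Dk 2 Y + Dk 4 X * Dk 3 Y) * f + 4 * Dk 4 X * Dk 2 Y * D f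
    + 3 * Dk 3 X * Dk 2 Y * Dk 2 f

/-- The 2-cocycle `Ω_{0,5}`. -/
def Om05 (X Y f : P) : P := term12 X Y f - term12 Y X f

/-!
A cup product of 1-cocycles is a 2-cocycle, because `L_X` acts on compositions by the Leibniz
rule; this applies to `Ω_{0,5}`.

For nontriviality, note that constants are invariant in `F_0`, while the action of a vector field
vanishing to second order at `0` produces densities vanishing at `0`. On such fields a coboundary
therefore satisfies `∂b(X,Y)(1)(0) = -b([X,Y])(1)(0)`. Since `[x⁵,x²] = -3x⁶ = 3[x⁴,x³]`, its value
at `(x⁵,x²)` is three times its value at `(x⁴,x³)`. For `Ω_{0,5}` these values are `240` and `144`.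
-/

theorem Dk_eq_iterate_derivative (k : ℕ) (f : P) : Dk k f = Polynomial.derivative^[k] f := rfl

theorem Dk_add (k : ℕ) (f g : P) : Dk k (f + g) = Dk k f + Dk k g :=
  iterate_map_add Polynomial.derivative k f g

theorem Dk_sub (k : ℕ) (f g : P) : Dk k (f - g) = Dk k f - Dk k g :=
  Polynomial.iterate_derivative_sub

theorem Dk_zero_right (k : ℕ) : Dk k 0 = 0 := Polynomial.iterate_derivative_zero

theorem D_sub (f g : P) : D (f - g) = D f - D g := Polynomial.derivative_sub

theorem Lw_sub (l : ℝ) (X f g : P) : Lw l X (f - g) = Lw l X f - Lw l X g := by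
  simp only [Lw, D_sub]
  ring

theorem Lw_neg (l : ℝ) (X f : P) : Lw l X (-f) = -Lw l X f := by
  simp only [Lw, D, Polynomial.derivative_neg]
  ring

theorem LD_sub (nu mu : ℝ) (X : P) (A B : P → P) (f : P) :
    LD nu mu X (fun g => A g - B g) f = LD nu mu X A f - LD nu mu X B f := by
  simp only [LD, Lw_sub]
  ring

theorem LD_neg (nu mu : ℝ) (X : P) (A : P → P) (f : P) :
    LD nu mu X (fun g => -A g) f = -LD nu mu X A f := by
  simp only [LD, Lw_neg]
  ring

theorem LD_comp (l mu nu : ℝ) (X : P) {A : P → P} (hA : ∀ f g, A (f - g) = A f - A g)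
    (B : P → P) (f : P) :
    LD l nu X (fun g => A (B g)) f = LD mu nu X A (B f) + A (LD l mu X B f) := by
  simp only [LD, hA]
  ring

theorem IsCocycle2.neg {nu mu : ℝ} {o : P → P → P → P} (ho : IsCocycle2 nu mu o) :
    IsCocycle2 nu mu (fun X Y f => -o X Y f) := by
  intro X Y Z f
  simp only [LD_neg]
  linear_combination -ho X Y Z f

theorem isCocycle2_cup {l mu nu : ℝ} {c₁ c₂ : P → P → P} (h₁ : IsCocycle1 mu nu c₁)
    (h₂ : IsCocycle1 l mu c₂) (hsub : ∀ X f g, c₁ X (f - g) = c₁ X f - c₁ X g) :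
    IsCocycle2 l nu (cup c₁ c₂) := by
  have leibniz (X Y Z f : P) : LD l nu X (cup c₁ c₂ Y Z) f =
      LD mu nu X (c₁ Y) (c₂ Z f) + c₁ Y (LD l mu X (c₂ Z) f)
        - (LD mu nu X (c₁ Z) (c₂ Y f) + c₁ Z (LD l mu X (c₂ Y) f)) := by
    rw [← LD_comp l mu nu X (hsub Y), ← LD_comp l mu nu X (hsub Z), ← LD_sub]
    rfl
  have cup_br (X Y Z f : P) : cup c₁ c₂ (br X Y) Z f =
      LD mu nu X (c₁ Y) (c₂ Z f) - LD mu nu Y (c₁ X) (c₂ Z f)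
        - (c₁ Z (LD l mu X (c₂ Y) f) - c₁ Z (LD l mu Y (c₂ X) f)) := by
    rw [cup, h₁, h₂, hsub]
  intro X Y Z f
  rw [leibniz, leibniz, leibniz, cup_br, cup_br, cup_br]
  ring

/-- The 1-cochain `X ↦ X‴ f + 2 X″ f′` raising density weights by two; for weight `0` it is the
`C_{0,2}` of the paper. -/
def cochainShiftTwo (X f : P) : P := Dk 3 X * f + 2 * Dk 2 X * D f

/-- The 1-cochain `X ↦ X‴ f′ + X″ f″` raising density weights by three; for weight `2` it is the
`C_{2,5}` of the paper. -/
def cochainShiftThree (X f : P) : P := Dk 3 X * D f + Dk 2 X * Dk 2 f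

theorem isCocycle1_cochainShiftTwo (l : ℝ) : IsCocycle1 l (l + 2) cochainShiftTwo := by
  intro X Y f
  simp only [cochainShiftTwo, LD, Lw, br, Dk, D, Function.iterate_succ_apply',
    Function.iterate_zero_apply, Polynomial.derivative_add, Polynomial.derivative_sub,
    Polynomial.derivative_mul, Polynomial.derivative_C, Polynomial.derivative_ofNat,
    Polynomial.C_add, Polynomial.C_ofNat]
  ring

theorem isCocycle1_cochainShiftThree (l : ℝ) : IsCocycle1 l (l + 3) cochainShiftThree := by
  intro X Y f
  simp only [cochainShiftThree, LD, Lw, br, Dk, D, Function.iterate_succ_apply',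
    Function.iterate_zero_apply, Polynomial.derivative_add, Polynomial.derivative_sub,
    Polynomial.derivative_mul, Polynomial.derivative_C, Polynomial.derivative_zero,
    Polynomial.C_add, Polynomial.C_ofNat]
  ring

theorem cochainShiftThree_sub (X f g : P) :
    cochainShiftThree X (f - g) = cochainShiftThree X f - cochainShiftThree X g := by
  simp only [cochainShiftThree, D_sub, Dk_sub]
  ring

theorem Om05_eq_neg_cup (X Y f : P) :
    Om05 X Y f = -cup cochainShiftThree cochainShiftTwo X Y f := by
  simp only [Om05, term12, cup, cochainShiftTwo, cochainShiftThree, Dk, D,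
    Function.iterate_succ_apply', Function.iterate_zero_apply, Polynomial.derivative_add,
    Polynomial.derivative_mul, Polynomial.derivative_ofNat]
  ring

theorem isCocycle2_Om05 : IsCocycle2 0 5 Om05 := by
  have hOm05 : Om05 = fun X Y f => -cup cochainShiftThree cochainShiftTwo X Y f :=
    funext fun X => funext fun Y => funext fun f => Om05_eq_neg_cup X Y f
  have h25 : IsCocycle1 2 5 cochainShiftThree := by
    convert isCocycle1_cochainShiftThree 2 using 1
    norm_num
  have h02 : IsCocycle1 0 2 cochainShiftTwo := by
    convert isCocycle1_cochainShiftTwo 0 using 1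
    norm_num
  rw [hOm05]
  exact (isCocycle2_cup h25 h02 cochainShiftThree_sub).neg

theorem Lw_zero_one (X : P) : Lw 0 X 1 = 0 := by
  simp [Lw, D]

theorem eval_Lw_eq_zero (l : ℝ) {X : P} {t : ℝ} (hX : X.eval t = 0) (hDX : (D X).eval t = 0)
    (f : P) : (Lw l X f).eval t = 0 := by
  simp [Lw, hX, hDX]

theorem eval_cob_one (mu : ℝ) {b : P → P → P} (hb : ∀ X, b X 0 = 0) {X Y : P} {t : ℝ}
    (hX : X.eval t = 0) (hDX : (D X).eval t = 0) (hY : Y.eval t = 0) (hDY : (D Y).eval t = 0) :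
    (cob 0 mu b X Y 1).eval t = -(b (br X Y) 1).eval t := by
  simp [cob, LD, Lw_zero_one, hb, eval_Lw_eq_zero mu hX hDX, eval_Lw_eq_zero mu hY hDY]

theorem br_X_pow (m n : ℕ) :
    br (Polynomial.X ^ (m + 1)) (Polynomial.X ^ (n + 1)) =
      ((n : P) - (m : P)) * Polynomial.X ^ (m + n + 1) := by
  simp only [br, D, Polynomial.derivative_X_pow_succ, map_add, map_natCast, map_one]
  ring

theorem eval_zero_cob_X_pow_one (mu : ℝ) {b : P → P → P} (hb : ∀ X, b X 0 = 0) (m n : ℕ) :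
    (cob 0 mu b (Polynomial.X ^ (m + 2)) (Polynomial.X ^ (n + 2)) 1).eval 0 =
      -(b (br (Polynomial.X ^ (m + 2)) (Polynomial.X ^ (n + 2))) 1).eval 0 :=
  eval_cob_one mu hb (by simp) (by simp [D]) (by simp) (by simp [D])

theorem Om05_one (X Y : P) :
    Om05 X Y 1 = Dk 5 X * Dk 2 Y + Dk 4 X * Dk 3 Y - (Dk 5 Y * Dk 2 X + Dk 4 Y * Dk 3 X) := by
  simp [Om05, term12, Dk_eq_iterate_derivative, D]

theorem Om05_X_pow_four_X_pow_three_one :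
    Om05 (Polynomial.X ^ 4) (Polynomial.X ^ 3) 1 = 144 := by
  norm_num [Om05_one, Dk_eq_iterate_derivative,
    Polynomial.iterate_derivative_X_pow_eq_natCast_mul, Nat.descFactorial]

theorem Om05_X_pow_five_X_pow_two_one :
    Om05 (Polynomial.X ^ 5) (Polynomial.X ^ 2) 1 = 240 := by
  norm_num [Om05_one, Dk_eq_iterate_derivative,
    Polynomial.iterate_derivative_X_pow_eq_natCast_mul, Nat.descFactorial]

theorem Om05_ne_cob {b : P → P → P} (hadd : ∀ X Y f, b (X + Y) f = b X f + b Y f)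
    (hzero : ∀ X, b X 0 = 0) : ¬ ∀ X Y f : P, Om05 X Y f = cob 0 5 b X Y f := by
  intro h
  have br_five_two : br (Polynomial.X ^ 5) (Polynomial.X ^ 2) =
      br (Polynomial.X ^ 4) (Polynomial.X ^ 3) + br (Polynomial.X ^ 4) (Polynomial.X ^ 3)
        + br (Polynomial.X ^ 4) (Polynomial.X ^ 3) := by
    rw [br_X_pow 4 1, br_X_pow 3 2]
    push_cast
    ring
  have value_four_three : 144 = -(b (br (Polynomial.X ^ 4) (Polynomial.X ^ 3)) 1).eval 0 := by
    rw [← eval_zero_cob_X_pow_one 5 hzero 2 1, ← h, Om05_X_pow_four_X_pow_three_one,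
      Polynomial.eval_ofNat]
  have value_five_two : 240 = -(b (br (Polynomial.X ^ 5) (Polynomial.X ^ 2)) 1).eval 0 := by
    rw [← eval_zero_cob_X_pow_one 5 hzero 3 0, ← h, Om05_X_pow_five_X_pow_two_one,
      Polynomial.eval_ofNat]
  rw [br_five_two, hadd, hadd, Polynomial.eval_add, Polynomial.eval_add] at value_five_two
  linarith

theorem Om05_nontrivial_two_cocycle_general :
    (∀ X Y f : P, Om05 X Y f = -cup cochainShiftThree cochainShiftTwo X Y f) ∧
    IsCocycle2 0 5 Om05 ∧
    ∀ b : P → P → P, (∀ X Y f, b (X + Y) f = b X f + b Y f) → (∀ X, b X 0 = 0) →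
      ¬ ∀ X Y f : P, Om05 X Y f = cob 0 5 b X Y f :=
  ⟨Om05_eq_neg_cup, isCocycle2_Om05, fun _ => Om05_ne_cob⟩

/-- `Ω_{0,5} = -[[C_{2,5},C_{0,2}]]` is a nontrivial 2-cocycle with values
in `D_{0,5}`. -/
theorem Om05_nontrivial_two_cocycle :
    (∀ X Y f : P, Om05 X Y f =
      - cup (fun X f => Dk 3 X * D f + Dk 2 X * Dk 2 f)
          (fun X f => Dk 3 X * f + 2 * Dk 2 X * D f) X Y f) ∧
    IsCocycle2 0 5 Om05 ∧
    ¬ ∃ a : Fin 7 → ℝ, ∀ X Y f : P, Om05 X Y f =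
      cob 0 5 (fun X f => ∑ j : Fin 7,
        Polynomial.C (a j) * Dk (6 - (j : ℕ)) X * Dk (j : ℕ) f) X Y f := by
  obtain ⟨hcup, hcocycle, hnontrivial⟩ := Om05_nontrivial_two_cocycle_general
  exact ⟨hcup, hcocycle, fun ⟨a, h⟩ => hnontrivial _
    (by simp [Dk_add, mul_add, add_mul, Finset.sum_add_distrib]) (by simp [Dk_zero_right]) h⟩
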